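/- (Littlewood's reduction formula) Let k ≥ 2 and λ ⊢ kp. If core_k(λ) ≠ ∅ then χ^λ_{kμ} = 0 for every μ ⊢ p. If core_k(λ) = ∅ with quot_k(λ) = (λ_1,…,λ_k), then for every partition μ ⊢ p: χ^λ_{kμ} = sign(π_λ) · Σ (z_μ/(z_{μ_1}···z_{μ_k})) · ∏_{i=1}^k χ^{λ_i}_{μ_i}, where the sum is over all k-tuples (μ_1,…,μ_k) of partitions with μ_i ⊢ |λ_i| for all i and μ_1 ⊕ … ⊕ μ_k = μ. -/

import Mathlib

open scoped BigOperators

namespace RimHookPaper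

/-- A partition: a weakly decreasing, eventually-zero sequence of naturals;
`parts n` is the `(n+1)`-st part. -/
structure Partition : Type where
  parts : ℕ → ℕ
  antitone : ∀ ⦃i j : ℕ⦄, i ≤ j → parts j ≤ parts i
  eventually_zero : ∃ N : ℕ, ∀ i : ℕ, N ≤ i → parts i = 0

namespace Partition

/-- The size `|λ|` of a partition. -/
noncomputable def size (P : Partition) : ℕ := ∑ᶠ i, P.parts i

/-- The empty partition. -/
def empty : Partition := ⟨fun _ => 0, fun _ _ _ => le_rfl, ⟨0, fun _ _ => rfl⟩⟩

/-- The number of nonzero parts of a partition. -/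
noncomputable def length (P : Partition) : ℕ := sInf {N | P.parts N = 0}

/-- The cells of the Young diagram of a partition. -/
def cells (P : Partition) : Set (ℕ × ℕ) := {c | c.2 < P.parts c.1}

instance : LE Partition := ⟨fun Q P => ∀ i, Q.parts i ≤ P.parts i⟩

/-- The skew shape `P / Q` (as a set of cells). -/
def skew (P Q : Partition) : Set (ℕ × ℕ) := P.cells \ Q.cells

end Partition

/-- Edge-adjacency of cells. -/
def Adj (c d : ℕ × ℕ) : Prop :=
  (c.1 = d.1 ∧ (c.2 + 1 = d.2 ∨ d.2 + 1 = c.2)) ∨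
    (c.2 = d.2 ∧ (c.1 + 1 = d.1 ∨ d.1 + 1 = c.1))

/-- A set of cells is (edge-)connected. -/
def IsConnectedSet (S : Set (ℕ × ℕ)) : Prop :=
  ∀ c ∈ S, ∀ d ∈ S, Relation.ReflTransGen (fun x y => x ∈ S ∧ y ∈ S ∧ Adj x y) c d

/-- `S` contains no 2×2 square. -/
def NoSquare (S : Set (ℕ × ℕ)) : Prop :=
  ¬ ∃ i j : ℕ, (i, j) ∈ S ∧ (i + 1, j) ∈ S ∧ (i, j + 1) ∈ S ∧ (i + 1, j + 1) ∈ S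

/-- `P / Q` is a rim hook (border strip) of length `t`: a nonempty connected skew
shape with no 2×2 square, consisting of `t` boxes. -/
def IsRimHook (P Q : Partition) (t : ℕ) : Prop :=
  Q ≤ P ∧ (P.skew Q).Nonempty ∧ IsConnectedSet (P.skew Q) ∧ NoSquare (P.skew Q) ∧
    (P.skew Q).ncard = t

/-- One step of a rim hook tableau: an empty hook (`t = 0`) or a rim hook of length `t`. -/
def IsStep (P Q : Partition) (t : ℕ) : Prop :=
  (t = 0 ∧ P = Q) ∨ (0 < t ∧ IsRimHook P Q t)

/-- Number of rows met by a set of cells. -/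
noncomputable def rowCount (S : Set (ℕ × ℕ)) : ℕ := (Prod.fst '' S).ncard

/-- A rim hook tableau of shape `P` and type `μ`: a chain
`∅ = λ⁰ ⊆ λ¹ ⊆ ⋯ ⊆ λʳ = P` with each `λⁱ/λⁱ⁻¹` a (possibly empty)
rim hook of length `μᵢ`. -/
structure RHT (P : Partition) (μ : List ℕ) : Type where
  chain : Fin (μ.length + 1) → Partition
  chain_zero : chain 0 = Partition.empty
  chain_last : chain (Fin.last μ.length) = P
  step : ∀ j : Fin μ.length, IsStep (chain j.succ) (chain j.castSucc) (μ.get j)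

/-- The total height of a rim hook tableau: the sum of the heights
(number of rows minus one) of its nonempty rim hooks. -/
noncomputable def RHT.height {P : Partition} {μ : List ℕ} (T : RHT P μ) : ℕ :=
  ∑ j : Fin μ.length, (rowCount ((T.chain j.succ).skew (T.chain j.castSucc)) - 1)

/-- The character value `χ^λ_μ` of the symmetric group, via the
Murnaghan–Nakayama rule. -/
noncomputable def chiAux (P : Partition) (μ : List ℕ) : ℤ :=
  ∑ᶠ T : RHT P μ, (-1 : ℤ) ^ T.height

/-- The parts of a multiset, listed in weakly decreasing order. -/
def typeList (μ : Multiset ℕ) : List ℕ := (μ.sort (· ≤ ·)).reverse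

/-- `χ^λ_μ` for a multiset type `μ`. -/
noncomputable def chi (P : Partition) (μ : Multiset ℕ) : ℤ := chiAux P (typeList μ)

/-- `z_μ = ∏_j m_j! · j^{m_j}` where `μ` has `m_j` parts equal to `j`. -/
def zpart (μ : Multiset ℕ) : ℕ := μ.prod * ∏ j ∈ μ.toFinset, (μ.count j).factorial

/-- `χ^λ(σ)`: the character evaluated at a permutation, via its full cycle type
(including fixed points as parts equal to 1). -/
noncomputable def chiPerm (P : Partition) {m : ℕ} (σ : Equiv.Perm (Fin m)) : ℤ :=
  chi P (σ.cycleType + Multiset.replicate (m - σ.cycleType.sum) 1)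

/-- Position of the zero (up step) corresponding to row `n` in the 0/1 sequence
`s(P)`, where the median of `s(P)` is the gap just below position `0`. -/
def zpos (P : Partition) (n : ℕ) : ℤ := (P.parts n : ℤ) - (n : ℤ) - 1

/-- `s(P)` has a `0` (an up step) at position `x`; otherwise it has a `1`. -/
def isZeroAt (P : Partition) (x : ℤ) : Prop := ∃ n : ℕ, zpos P n = x

/-- `Q` is the `k`-quotient of `P`: for each residue `i`, the 0/1 sequence of `Q i`
is (up to the shift `d` recording the position of its median) the subsequence of
`s(P)` consisting of every `k`-th digit, including the `(i+1)`-st digit after the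
median of `s(P)`. -/
def IsKQuotient (k : ℕ) (P : Partition) (Q : Fin k → Partition) : Prop :=
  ∀ i : Fin k, ∃ d : ℤ, ∀ j : ℤ,
    isZeroAt (Q i) j ↔ isZeroAt P (((i : ℕ) : ℤ) + (j + d) * (k : ℤ))

/-- `C` is the `k`-core of `P`: it is obtained from `P` by successively removing
rim hooks of length `k`, as long as possible. -/
def IsKCore (k : ℕ) (P C : Partition) : Prop :=
  Relation.ReflTransGen (fun A B => IsRimHook A B k) P C ∧ ¬ ∃ C', IsRimHook C C' k

/-- The map on row indices induced by moving the zero in row `m` down (left)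
to row `m'`, the zeros in rows `m+1,…,m'` each moving up one row. -/
def cycleFun (m m' n : ℕ) : ℕ :=
  if n = m then m' else if m < n ∧ n ≤ m' then n - 1 else n

/-- One tracking step for the zero permutation: passing from `A` to `B` by removing
a rim hook, encoded on the 0/1 sequence as interchanging a `1` with a later `0`
(the moved zero, in row `m` of `A`, jumps over `m' - m` zeros, landing in row `m'`
of `B`); the row of each labeled zero is updated by `cycleFun m m'`. -/
def StepTrack (A B : Partition) (f g : ℕ → ℕ) : Prop :=
  (A = B ∧ g = f) ∨
    ∃ m m' : ℕ, m ≤ m' ∧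
      (∀ n, n < m → zpos B n = zpos A n) ∧
      (∀ n, m ≤ n → n < m' → zpos B n = zpos A (n + 1)) ∧
      (∀ n, m' < n → zpos B n = zpos A n) ∧
      g = fun i => cycleFun m m' (f i)

/-- `π` is the zero permutation of the rim hook tableau `T`: label the zeros of
`s(P)` succeeding the first one by `1,…,ℓ(P)` from left to right (`q j i` is the
row of label `i+1` at stage `j` of the peeling, rows counted from the top), peel
the rim hooks of `T` in order of decreasing entries, and read off the labels in
the final sequence `s(∅)` from left to right. -/
def IsZeroPerm {P : Partition} {μ : List ℕ} (T : RHT P μ)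
    (π : Equiv.Perm (Fin P.length)) : Prop :=
  ∃ q : Fin (μ.length + 1) → ℕ → ℕ,
    (∀ i : ℕ, i < P.length → q (Fin.last μ.length) i = P.length - 1 - i) ∧
    (∀ j : Fin μ.length,
      StepTrack (T.chain j.succ) (T.chain j.castSucc) (q j.succ) (q j.castSucc)) ∧
    (∀ i : Fin P.length, q 0 ((π i : ℕ)) = P.length - 1 - (i : ℕ))

/-- `ω(T) = (T₁,…,T_k)`: the rim hook tableau `T` (all of whose hook lengths are
divisible by `k`) decomposes into the `k`-tuple of rim hook tableaux `Ti` on the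
`k`-quotient: each step of `T`, removing a hook of length `k·t`, affects exactly
one subsequence (mod `k`) of the 0/1 sequence, i.e. removes a hook of length `t`
from exactly one of the quotient partitions. -/
def OmegaRel (k : ℕ) {P : Partition} {κ : List ℕ} (T : RHT P κ)
    {Q : Fin k → Partition} {ν : Fin k → List ℕ}
    (Ti : ∀ i : Fin k, RHT (Q i) (ν i)) : Prop :=
  ∃ (QC : Fin (κ.length + 1) → Fin k → Partition) (a : Fin κ.length → Fin k),
    (∀ j, IsKQuotient k (T.chain j) (QC j)) ∧
    (∀ j : Fin κ.length, ∀ i, i ≠ a j → QC j.castSucc i = QC j.succ i) ∧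
    (∀ j : Fin κ.length, ∃ t : ℕ, κ.get j = k * t ∧
      IsStep (QC j.succ (a j)) (QC j.castSucc (a j)) t) ∧
    (∀ i : Fin k, ∃ e : Fin (ν i).length → Fin κ.length,
      StrictMono e ∧ (∀ s, a (e s) = i) ∧ (∀ j, a j = i → ∃ s, e s = j) ∧
      (∀ s, k * (ν i).get s = κ.get (e s)) ∧
      (Ti i).chain 0 = QC 0 i ∧
      (∀ s : Fin (ν i).length, (Ti i).chain s.succ = QC (Fin.succ (e s)) i))

theorem Partition.ext' {P R : Partition} (h : ∀ n, P.parts n = R.parts n) : P = R := by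
  cases P; cases R; congr; funext n; exact h n

theorem zpos_strictAnti (P : Partition) : StrictAnti (zpos P) := by
  apply strictAnti_nat_of_succ_lt
  intro n
  have := P.antitone (Nat.le_add_right n 1)
  simp only [zpos]; push_cast; omega

theorem zpos_ext {P R : Partition} (h : ∀ n, zpos P n = zpos R n) : P = R := by
  apply Partition.ext'
  intro n
  have := h n
  simp only [zpos] at this; omega

theorem isZeroAt_ext {P R : Partition} (h : ∀ x, isZeroAt P x ↔ isZeroAt R x) : P = R := by
  apply zpos_ext
  have h1 : StrictMono (fun n => - zpos P n) := fun a b hab => by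
    have := zpos_strictAnti P hab
    simp only; omega
  have h2 : StrictMono (fun n => - zpos R n) := fun a b hab => by
    have := zpos_strictAnti R hab
    simp only; omega
  have h3 : Set.range (fun n => - zpos P n) = Set.range (fun n => - zpos R n) := by
    ext x
    have := h (-x)
    simp only [isZeroAt] at this
    simp only [Set.mem_range]
    constructor
    · rintro ⟨n, hn⟩
      obtain ⟨m, hm⟩ := this.1 ⟨n, by omega⟩
      exact ⟨m, by omega⟩
    · rintro ⟨n, hn⟩
      obtain ⟨m, hm⟩ := this.2 ⟨n, by omega⟩
      exact ⟨m, by omega⟩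
  have h4 := (StrictMono.range_inj h1 h2).1 h3
  intro n
  have := congrFun h4 n
  omega

theorem mkPart (f : ℕ → ℤ) (hf : StrictAnti f) (N : ℕ) (hN : ∀ n, N ≤ n → f n = -n - 1) :
    ∃ P : Partition, ∀ n, zpos P n = f n := by
  have hanti : Antitone (fun n : ℕ => f n + n + 1) := by
    apply antitone_nat_of_succ_le
    intro n
    have := hf (Nat.lt_succ_self n)
    simp only [Nat.succ_eq_add_one] at this
    push_cast; omega
  have hnn : ∀ n : ℕ, 0 ≤ f n + n + 1 := by
    intro n
    have h1 := hanti (Nat.le_add_right n N)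
    have h2 := hN (n + N) (by omega)
    simp only at h1
    rw [h2] at h1
    omega
  refine ⟨⟨fun n => (f n + n + 1).toNat, ?_, N, ?_⟩, ?_⟩
  · intro i j hij
    have := hanti hij
    simp only at this
    exact Int.toNat_le_toNat this
  · intro i hi
    simp only [hN i hi]; omega
  · intro n
    have := hnn n
    simp only [zpos]; omega

theorem filled_exists (P : Partition) : ∃ N : ℕ, ∀ n, N ≤ n → zpos P n = -n - 1 := by
  obtain ⟨N, hN⟩ := P.eventually_zero
  exact ⟨N, fun n hn => by simp [zpos, hN n hn]⟩

theorem isZeroAt_of_lt {P : Partition} {N : ℕ} (hN : ∀ n, N ≤ n → zpos P n = -n - 1) {x : ℤ}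
    (hx : x < -N) : isZeroAt P x :=
  ⟨(-x - 1).toNat, by rw [hN _ (by omega)]; omega⟩

theorem isZeroAt_empty (x : ℤ) : isZeroAt Partition.empty x ↔ x < 0 := by
  constructor
  · rintro ⟨n, rfl⟩; simp [zpos, Partition.empty]; omega
  · intro h; exact ⟨(-x - 1).toNat, by simp [zpos, Partition.empty]; omega⟩

/-- row-level description of a bead move -/
def Shift (P R : Partition) (m m' : ℕ) : Prop :=
  m ≤ m' ∧ (∀ n, n < m → zpos R n = zpos P n) ∧
      (∀ n, m ≤ n → n < m' → zpos R n = zpos P (n + 1)) ∧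
      (∀ n, m' < n → zpos R n = zpos P n)

/-- bead-level description of a bead move -/
def Mv (P R : Partition) (x : ℤ) (t : ℕ) : Prop :=
  isZeroAt P x ∧ ¬ isZeroAt P (x - t) ∧
    ∀ z, isZeroAt R z ↔ (z = x - t ∨ (isZeroAt P z ∧ z ≠ x))

theorem Mv.unique {P R R' : Partition} {x : ℤ} {t : ℕ} (h : Mv P R x t) (h' : Mv P R' x t) :
    R = R' := isZeroAt_ext fun z => by rw [h.2.2, h'.2.2]

theorem shift_exists (P : Partition) (x : ℤ) (t : ℕ) (ht : 0 < t) (hx : isZeroAt P x)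
    (hy : ¬ isZeroAt P (x - t)) :
    ∃ R m m', Shift P R m m' ∧ zpos P m = x ∧ zpos R m' = x - t := by
  classical
  obtain ⟨m, rfl⟩ := hx
  obtain ⟨N, hN⟩ := filled_exists P
  have hanti := zpos_strictAnti P
  have hex : ∃ n, zpos P n < zpos P m - t := by
    refine ⟨N + (zpos P m - t).natAbs, ?_⟩
    rw [hN _ (by omega)]; push_cast
    have := neg_abs_le (zpos P m - t)
    omega
  obtain ⟨n0, hn0, hmin⟩ : ∃ n0, zpos P n0 < zpos P m - t ∧ ∀ n < n0, zpos P m - t < zpos P n := by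
    refine ⟨Nat.find hex, Nat.find_spec hex, fun n hn => ?_⟩
    have h1 := Nat.find_min hex hn
    have h2 : zpos P n ≠ zpos P m - t := fun h => hy ⟨n, h⟩
    omega
  have hm : m < n0 := by
    by_contra h
    have := hanti.antitone (not_lt.1 h)
    omega
  obtain ⟨m', rfl⟩ : ∃ m', n0 = m' + 1 := ⟨n0 - 1, by omega⟩
  obtain ⟨R, hR⟩ := mkPart (fun n => if n < m then zpos P n else if n < m' then zpos P (n+1) else
    if n = m' then zpos P m - t else zpos P n) (by
      apply strictAnti_nat_of_succ_lt
      intro n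
      have e1 := hanti (Nat.lt_succ_self n)
      have e2 := hanti (Nat.lt_succ_self (n+1))
      simp only [Nat.succ_eq_add_one] at e1 e2
      have e3 : n + 1 = m' → zpos P m - t < zpos P (n+1) := fun h => hmin _ (by omega)
      have e4 : n = m' → zpos P (n+1) < zpos P m - t := fun h => by subst h; exact hn0
      have e5 : n + 1 = m → zpos P m = zpos P (n+1) := fun h => by subst h; rfl
      split_ifs <;> first | omega | (have := e3 (by omega); omega)) (N + m' + 1) (by
      intro n hn
      rw [if_neg (by omega), if_neg (by omega), if_neg (by omega), hN _ (by omega)])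
  refine ⟨R, m, m', ⟨by omega, ?_, ?_, ?_⟩, rfl, ?_⟩
  · intro n hn; rw [hR, if_pos hn]
  · intro n hn hn'; rw [hR, if_neg (by omega), if_pos hn']
  · intro n hn; rw [hR, if_neg (by omega), if_neg (by omega), if_neg (by omega)]
  · rw [hR, if_neg (by omega), if_neg (by omega), if_pos rfl]

/-- beads strictly between -/
def btwSet (P : Partition) (x : ℤ) (t : ℕ) : Set ℤ := {b | isZeroAt P b ∧ x - t < b ∧ b < x}

theorem Shift.mv {P R : Partition} {m m' : ℕ} (h : Shift P R m m') {t : ℕ} (ht : 0 < t)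
    (hx : zpos R m' = zpos P m - t) : Mv P R (zpos P m) t ∧ (btwSet P (zpos P m) t).ncard = m' - m := by
  obtain ⟨h0, h1, h2, h3⟩ := h
  have aP := zpos_strictAnti P
  have aR := zpos_strictAnti R
  -- rows above are bigger, rows below are smaller
  have big : ∀ n, n ≤ m' → zpos R m' < zpos P n := by
    intro n hn
    rcases lt_or_ge n m with h | h
    · rw [← h1 n h]; exact aR (by omega)
    · rcases Nat.eq_or_lt_of_le h with rfl | h
      · omega
      · have := h2 (n-1) (by omega) (by omega)
        rw [Nat.sub_add_cancel (by omega)] at this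
        rw [← this]; exact aR (by omega)
  have small : ∀ n, m' < n → zpos P n < zpos R m' := by
    intro n hn
    rw [← h3 n hn]; exact aR hn
  refine ⟨⟨⟨m, rfl⟩, ?_, ?_⟩, ?_⟩
  · rintro ⟨n, hn⟩
    rcases le_or_gt n m' with h | h
    · have := big n h; omega
    · have := small n h; omega
  · intro z
    constructor
    · rintro ⟨n, rfl⟩
      rcases lt_or_ge n m with h | h
      · right; rw [h1 n h]; exact ⟨⟨n, rfl⟩, (aP h).ne'⟩
      rcases lt_or_ge n m' with h' | h'
      · right; rw [h2 n h h']; exact ⟨⟨n+1, rfl⟩, (aP (by omega)).ne⟩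
      rcases Nat.eq_or_lt_of_le h' with rfl | h'
      · left; exact hx
      · right; rw [h3 n h']; exact ⟨⟨n, rfl⟩, (aP (by omega)).ne⟩
    · rintro (rfl | ⟨⟨n, rfl⟩, hne⟩)
      · exact ⟨m', hx⟩
      · have hnm : n ≠ m := fun h => hne (by rw [h])
        rcases lt_or_ge n m with h | h
        · exact ⟨n, h1 n h⟩
        rcases le_or_gt n m' with h' | h'
        · refine ⟨n - 1, ?_⟩
          have := h2 (n-1) (by omega) (by omega)
          rwa [Nat.sub_add_cancel (by omega)] at this
        · exact ⟨n, h3 n h'⟩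
  · have : btwSet P (zpos P m) t = zpos P '' (Finset.Ioc m m' : Finset ℕ) := by
      ext b
      simp only [btwSet, Set.mem_ofPred_eq, Set.mem_image, Finset.coe_Ioc, Set.mem_Ioc]
      constructor
      · rintro ⟨⟨n, rfl⟩, hb1, hb2⟩
        refine ⟨n, ⟨aP.lt_iff_gt.1 hb2, ?_⟩, rfl⟩
        by_contra hh
        have := small n (by omega)
        omega
      · rintro ⟨n, ⟨hn, hn'⟩, rfl⟩
        exact ⟨⟨n, rfl⟩, by rw [← hx]; exact big n hn', aP hn⟩
    rw [this, Set.ncard_image_of_injective _ aP.injective, Set.ncard_coe_finset]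
    simp

theorem Mv.shift {P R : Partition} {x : ℤ} {t : ℕ} (ht : 0 < t) (h : Mv P R x t) :
    ∃ m m', Shift P R m m' ∧ zpos P m = x ∧ zpos R m' = zpos P m - t := by
  obtain ⟨R', m, m', hs, rfl, hy⟩ := shift_exists P x t ht h.1 h.2.1
  have := (hs.mv ht hy).1
  rw [h.unique this]
  exact ⟨m, m', hs, rfl, hy⟩

theorem Mv.exists {P : Partition} {x : ℤ} {t : ℕ} (ht : 0 < t) (hx : isZeroAt P x)
    (hy : ¬ isZeroAt P (x - t)) : ∃ R, Mv P R x t := by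
  obtain ⟨R', m, m', hs, rfl, hy⟩ := shift_exists P x t ht hx hy
  exact ⟨R', (hs.mv ht hy).1⟩
theorem mem_skew {P R : Partition} {c : ℕ × ℕ} :
    c ∈ P.skew R ↔ R.parts c.1 ≤ c.2 ∧ c.2 < P.parts c.1 := by
  show (c.2 < P.parts c.1 ∧ ¬ (c.2 < R.parts c.1)) ↔ _
  omega

theorem Shift.rows {P R : Partition} {m m' : ℕ} (h : Shift P R m m') (hle : R ≤ P) (hne : P ≠ R)
    (n : ℕ) : R.parts n < P.parts n ↔ m ≤ n ∧ n ≤ m' := by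
  obtain ⟨h0, h1, h2, h3⟩ := h
  have aR := zpos_strictAnti R
  have key : ∀ n, n < m ∨ m' < n → R.parts n = P.parts n := by
    rintro n (hn | hn)
    · have := h1 n hn; simp only [zpos] at this; omega
    · have := h3 n hn; simp only [zpos] at this; omega
  constructor
  · intro hlt
    by_contra hh
    have := key n (by omega)
    omega
  · rintro ⟨hn, hn'⟩
    rcases Nat.eq_or_lt_of_le hn' with rfl | hn'
    · rcases Nat.eq_or_lt_of_le hn with rfl | hn
      · by_contra hh
        apply hne
        apply Partition.ext'
        intro j
        rcases lt_trichotomy j m with hj | rfl | hj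
        · exact (key j (by omega)).symm
        · have := hle j; omega
        · exact (key j (by omega)).symm
      · have e1 := h2 (n-1) (by omega) (by omega)
        rw [Nat.sub_add_cancel (by omega)] at e1
        have e2 := aR (show n - 1 < n by omega)
        rw [e1] at e2
        simp only [zpos] at e2; omega
    · have e1 := h2 n (by omega) (by omega)
      have e2 := P.antitone (Nat.le_add_right n 1)
      simp only [zpos] at e1; push_cast at e1; omega

theorem Shift.rowCount {P R : Partition} {m m' : ℕ} (h : Shift P R m m') (hle : R ≤ P)
    (hne : P ≠ R) : rowCount (P.skew R) = m' + 1 - m := by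
  have : Prod.fst '' (P.skew R) = (Finset.Icc m m' : Finset ℕ) := by
    ext n
    simp only [Set.mem_image, mem_skew, Finset.coe_Icc, Set.mem_Icc, Prod.exists,
      exists_and_right, exists_eq_right]
    rw [← h.rows hle hne]
    constructor
    · rintro ⟨x, hx⟩; omega
    · intro hn; exact ⟨_, le_rfl, hn⟩
  rw [RimHookPaper.rowCount, this, Set.ncard_coe_finset]
  simp

theorem Shift.ncard {P R : Partition} {m m' : ℕ} (h : Shift P R m m') (hle : R ≤ P)
    (hne : P ≠ R) : ((P.skew R).ncard : ℤ) = zpos P m - zpos R m' := by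
  have hs : P.skew R = ((Finset.Ico m (m'+1)).biUnion fun i =>
      ({i} : Finset ℕ) ×ˢ Finset.Ico (R.parts i) (P.parts i) : Finset (ℕ × ℕ)) := by
    ext ⟨i, j⟩
    have := h.rows hle hne i
    rw [mem_skew]
    simp
    omega
  rw [hs, Set.ncard_coe_finset, Finset.card_biUnion]
  · have h0 := h.1
    have h2 := h.2.2.1
    have e1 : ∀ i, ((({i} : Finset ℕ) ×ˢ Finset.Ico (R.parts i) (P.parts i)).card : ℤ)
        = zpos P i - zpos R i := by
      intro i
      have := hle i
      simp [zpos]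
      omega
    push_cast
    rw [Finset.sum_congr rfl (fun i _ => e1 i), Finset.sum_sub_distrib,
      Finset.sum_eq_sum_Ico_succ_bot (by omega), Finset.sum_Ico_succ_top h0,
      ← Finset.sum_Ico_add' (fun i => zpos P i) m m' 1]
    rw [Finset.sum_congr rfl (fun i hi => h2 i (Finset.mem_Ico.1 hi).1 (Finset.mem_Ico.1 hi).2)]
    ring
  · intro i _ j _ hij
    rw [Function.onFun, Finset.disjoint_left]
    rintro ⟨a, b⟩ ha hb
    simp at ha hb
    omega

theorem Shift.le_ne {P R : Partition} {m m' : ℕ} (h : Shift P R m m') {t : ℕ} (ht : 0 < t)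
    (hx : zpos R m' = zpos P m - t) : R ≤ P ∧ P ≠ R := by
  obtain ⟨h0, h1, h2, h3⟩ := h
  have aR := zpos_strictAnti R
  have aP := zpos_strictAnti P
  constructor
  · intro n
    suffices zpos R n ≤ zpos P n by simp only [zpos] at this; omega
    rcases lt_or_ge n m with h | h
    · exact (h1 n h).le
    rcases lt_or_ge n m' with h' | h'
    · rw [h2 n h h']; exact (aP (Nat.lt_succ_self n)).le
    rcases Nat.eq_or_lt_of_le h' with rfl | h'
    · rcases Nat.eq_or_lt_of_le h with rfl | h
      · omega
      · have e1 := h2 (m'-1) (by omega) (by omega)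
        rw [Nat.sub_add_cancel (by omega)] at e1
        rw [← e1]
        exact (aR (by omega)).le
    · exact (h3 n h').le
  · rintro rfl
    rcases Nat.eq_or_lt_of_le h0 with rfl | h0
    · omega
    · have := h2 m le_rfl h0
      have := aP (Nat.lt_succ_self m)
      simp only [Nat.succ_eq_add_one] at this
      omega

/-- relation used in connectedness -/
abbrev Cn (S : Set (ℕ × ℕ)) := Relation.ReflTransGen (fun x y => x ∈ S ∧ y ∈ S ∧ Adj x y)

theorem Cn.symm {S : Set (ℕ × ℕ)} {c d : ℕ × ℕ} (h : Cn S c d) : Cn S d c := by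
  induction h with
  | refl => exact Relation.ReflTransGen.refl
  | tail _ h2 ih =>
    refine Relation.ReflTransGen.head ⟨h2.2.1, h2.1, ?_⟩ ih
    have h3 := h2.2.2
    simp only [Adj] at h3 ⊢
    omega

theorem row_conn {P R : Partition} {i j : ℕ} (h : (i, j) ∈ P.skew R) (l : ℕ)
    (hl : R.parts i ≤ l) (hlj : l ≤ j) : Cn (P.skew R) (i, l) (i, j) := by
  induction j, hlj using Nat.le_induction with
  | base => exact Relation.ReflTransGen.refl
  | succ j hj ih =>
    rw [mem_skew] at h
    simp only at h
    have h' : (i, j) ∈ P.skew R := by rw [mem_skew]; simp only; omega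
    refine Relation.ReflTransGen.tail (ih h') ⟨h', by rw [mem_skew]; simpa using h, ?_⟩
    left; simp

theorem row_conn' {P R : Partition} {i j l : ℕ} (h : (i, j) ∈ P.skew R) (h' : (i, l) ∈ P.skew R) :
    Cn (P.skew R) (i, l) (i, j) := by
  rw [mem_skew] at h'
  have := (mem_skew.1 h).1
  rcases le_total l j with hl | hl
  · exact row_conn h l h'.1 hl
  · exact (row_conn (mem_skew.2 h') j this hl).symm

theorem Shift.isRimHook {P R : Partition} {m m' : ℕ} (h : Shift P R m m') {t : ℕ} (ht : 0 < t)
    (hx : zpos R m' = zpos P m - t) : IsRimHook P R t := by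
  obtain ⟨hle, hne⟩ := h.le_ne ht hx
  have hrow := h.rows hle hne
  have hmid : ∀ n, m ≤ n → n < m' → P.parts (n+1) = R.parts n + 1 := by
    intro n hn hn'
    have := h.2.2.1 n hn hn'
    simp only [zpos] at this; push_cast at this; omega
  refine ⟨hle, ?_, ?_, ?_, ?_⟩
  · have := (hrow m).2 ⟨le_rfl, h.1⟩
    exact ⟨(m, R.parts m), by rw [mem_skew]; exact ⟨le_rfl, this⟩⟩
  · have key : ∀ d i, i + d = m' → ∀ j, (i, j) ∈ P.skew R →
        Cn (P.skew R) (i, j) (m', R.parts m') := by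
      intro d
      induction d with
      | zero =>
        rintro i rfl j hj
        refine row_conn' ?_ hj
        have := (mem_skew.1 hj)
        rw [mem_skew]; simp only [add_zero] at *; omega
      | succ d ih =>
        intro i hi j hj
        have h1 := (mem_skew.1 hj)
        simp only at h1
        have h2 := (hrow i).1 (by omega)
        have h3 := hmid i h2.1 (by omega)
        have h4 := (hrow (i+1)).2 (by omega)
        have c1 : (i, R.parts i) ∈ P.skew R := by rw [mem_skew]; simp only; omega
        have c2 : (i+1, R.parts i) ∈ P.skew R := by rw [mem_skew]; simp only; omega
        refine (row_conn' c1 hj).trans (Relation.ReflTransGen.head ⟨c1, c2, ?_⟩ (ih (i+1) (by omega) _ c2))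
        right; simp
    rintro ⟨i, j⟩ hc ⟨i', j'⟩ hd
    have e1 : i ≤ m' := by have := mem_skew.1 hc; exact ((hrow i).1 (by simp only at this; omega)).2
    have e2 : i' ≤ m' := by have := mem_skew.1 hd; exact ((hrow i').1 (by simp only at this; omega)).2
    exact (key (m' - i) i (by omega) j hc).trans (key (m' - i') i' (by omega) j' hd).symm
  · rintro ⟨i, j, c1, c2, c3, c4⟩
    rw [mem_skew] at c1 c2 c3 c4
    simp only at c1 c2 c3 c4
    have := (hrow i).1 (by omega)
    have := (hrow (i+1)).1 (by omega)
    have := hmid i (by omega) (by omega)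
    omega
  · have := h.ncard hle hne
    rw [hx] at this
    omega

theorem IsRimHook.shift {P R : Partition} {t : ℕ} (h : IsRimHook P R t) :
    ∃ m m', Shift P R m m' ∧ zpos R m' = zpos P m - t ∧ 0 < t := by
  classical
  obtain ⟨hle, ⟨⟨i0, j0⟩, hij⟩, hconn, hsq, hcard⟩ := h
  have hle' : ∀ n, R.parts n ≤ P.parts n := hle
  obtain ⟨N, hN⟩ := P.eventually_zero
  have hij' := mem_skew.1 hij
  simp only at hij'
  let S := (Finset.range N).filter (fun n => R.parts n < P.parts n)
  have hS : ∀ n, n ∈ S ↔ R.parts n < P.parts n := by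
    intro n
    simp only [S, Finset.mem_filter, Finset.mem_range, and_iff_right_iff_imp]
    intro h
    by_contra hh
    have := hN n (by omega); omega
  have hne : S.Nonempty := ⟨i0, by rw [hS]; omega⟩
  have hmin := (hS _).1 (S.min'_mem hne)
  have hmax := (hS _).1 (S.max'_mem hne)
  have hmm : S.min' hne ≤ S.max' hne := Finset.min'_le_max' _ _
  have hmin' : ∀ n, R.parts n < P.parts n → S.min' hne ≤ n := fun n hn => S.min'_le n ((hS n).2 hn)
  have hmax' : ∀ n, R.parts n < P.parts n → n ≤ S.max' hne := fun n hn => S.le_max' n ((hS n).2 hn)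
  generalize S.min' hne = m at *
  generalize S.max' hne = m' at *
  have hmid : ∀ n, m ≤ n → n < m' → P.parts (n+1) = R.parts n + 1 := by
    intro n hn hn'
    apply le_antisymm
    · by_contra hh
      apply hsq
      have e1 := P.antitone (Nat.le_add_right n 1)
      have e2 := R.antitone (Nat.le_add_right n 1)
      refine ⟨n, R.parts n, ?_, ?_, ?_, ?_⟩ <;> rw [mem_skew] <;> simp only <;> omega
    · by_contra hh
      have c1 : (m, R.parts m) ∈ P.skew R := by rw [mem_skew]; exact ⟨le_rfl, hmin⟩
      have c2 : (m', R.parts m') ∈ P.skew R := by rw [mem_skew]; exact ⟨le_rfl, hmax⟩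
      have : ∀ d, Cn (P.skew R) (m, R.parts m) d → d.1 ≤ n := by
        intro d hd
        induction hd with
        | refl => exact hn
        | @tail b c _ h2 ih =>
          obtain ⟨hb, hc, hadj⟩ := h2
          by_contra hcn
          obtain ⟨b1, b2⟩ := b
          obtain ⟨c1, c2⟩ := c
          simp only [Adj] at hadj ih hcn
          obtain rfl : b1 = n := by omega
          obtain rfl : c1 = b1 + 1 := by omega
          rw [mem_skew] at hb hc
          simp only at hb hc
          omega
      have := this _ (hconn _ c1 _ c2)
      simp only at this
      omega
  have hsh : Shift P R m m' := by
    refine ⟨hmm, ?_, ?_, ?_⟩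
    · intro n hn
      have : ¬ R.parts n < P.parts n := fun h => by have := hmin' n h; omega
      have := hle' n
      simp only [zpos]; omega
    · intro n hn hn'
      have := hmid n hn hn'
      simp only [zpos]; push_cast; omega
    · intro n hn
      have : ¬ R.parts n < P.parts n := fun h => by have := hmax' n h; omega
      have := hle' n
      simp only [zpos]; omega
  have hPR : P ≠ R := by rintro rfl; omega
  refine ⟨m, m', hsh, ?_, ?_⟩
  · have := hsh.ncard hle hPR
    rw [hcard] at this; omega
  · have e1 := hsh.ncard hle hPR
    have aR := zpos_strictAnti R
    rw [hcard] at e1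
    have : zpos R m' < zpos P m' := by simp only [zpos]; omega
    have := (zpos_strictAnti P).antitone hmm
    omega

theorem isRimHook_iff {P R : Partition} {t : ℕ} :
    IsRimHook P R t ↔ 0 < t ∧ ∃ x, Mv P R x t := by
  constructor
  · intro h
    obtain ⟨m, m', hs, hx, ht⟩ := h.shift
    exact ⟨ht, _, (hs.mv ht hx).1⟩
  · rintro ⟨ht, x, h⟩
    obtain ⟨m, m', hs, rfl, hy⟩ := h.shift ht
    exact hs.isRimHook ht hy

theorem Mv.height {P R : Partition} {x : ℤ} {t : ℕ} (ht : 0 < t) (h : Mv P R x t) :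
    RimHookPaper.rowCount (P.skew R) - 1 = (btwSet P x t).ncard := by
  obtain ⟨m, m', hs, rfl, hy⟩ := h.shift ht
  obtain ⟨hle, hne⟩ := hs.le_ne ht hy
  rw [hs.rowCount hle hne, (hs.mv ht hy).2]
  omega

theorem Mv.x_unique {P R : Partition} {x x' : ℤ} {t : ℕ} (ht : 0 < t) (h : Mv P R x t)
    (h' : Mv P R x' t) : x = x' := by
  by_contra hne
  have h1 := (h.2.2 x).not.2 (by push Not; exact ⟨by omega, fun _ => rfl⟩)
  apply h1
  rw [h'.2.2]
  exact Or.inr ⟨h.1, hne⟩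
/-- removable beads -/
def remSet (P : Partition) (t : ℕ) : Set ℤ := {x | isZeroAt P x ∧ ¬ isZeroAt P (x - t)}

theorem isZeroAt_le {P : Partition} {x : ℤ} (h : isZeroAt P x) : x ≤ P.parts 0 := by
  obtain ⟨n, rfl⟩ := h
  have := P.antitone (Nat.zero_le n)
  simp only [zpos]; omega

theorem remSet_finite (P : Partition) (t : ℕ) : (remSet P t).Finite := by
  obtain ⟨N, hN⟩ := filled_exists P
  apply (Set.finite_Icc (-(N : ℤ)) (P.parts 0)).subset
  rintro x ⟨h1, h2⟩
  refine ⟨?_, isZeroAt_le h1⟩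
  by_contra hh
  exact h2 (isZeroAt_of_lt hN (by omega))

noncomputable def rem (P : Partition) (t : ℕ) : Finset ℤ := (remSet_finite P t).toFinset

theorem mem_rem {P : Partition} {t : ℕ} {x : ℤ} :
    x ∈ rem P t ↔ isZeroAt P x ∧ ¬ isZeroAt P (x - t) := by
  rw [rem, Set.Finite.mem_toFinset]; rfl

open Classical in
noncomputable def mv (P : Partition) (x : ℤ) (t : ℕ) : Partition :=
  if h : ∃ R, Mv P R x t then h.choose else P

theorem mv_spec {P : Partition} {x : ℤ} {t : ℕ} (ht : 0 < t) (hx : x ∈ rem P t) :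
    Mv P (mv P x t) x t := by
  rw [mem_rem] at hx
  have h := Mv.exists ht hx.1 hx.2
  rw [mv, dif_pos h]
  exact h.choose_spec

open Classical in
noncomputable def X : List ℕ → Partition → ℤ
  | [], P => if P = Partition.empty then 1 else 0
  | t :: l, P => ∑ x ∈ rem P t, (-1) ^ (btwSet P x t).ncard * X l (mv P x t)

/-- tableaux indexed by functions -/
abbrev RH (n : ℕ) (f : Fin n → ℕ) (P : Partition) : Type :=
  {c : Fin (n + 1) → Partition // c 0 = Partition.empty ∧ c (Fin.last n) = P ∧
    ∀ j : Fin n, IsStep (c j.succ) (c j.castSucc) (f j)}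

noncomputable def RH.ht {n : ℕ} {f : Fin n → ℕ} {P : Partition} (c : RH n f P) : ℕ :=
  ∑ j : Fin n, (rowCount ((c.1 j.succ).skew (c.1 j.castSucc)) - 1)

theorem IsStep.mv_iff {P R : Partition} {t : ℕ} (ht : 0 < t) :
    IsStep P R t ↔ ∃ x ∈ rem P t, R = mv P x t := by
  rw [IsStep, isRimHook_iff]
  constructor
  · rintro (h | ⟨_, _, x, hx⟩)
    · omega
    · have hr : x ∈ rem P t := mem_rem.2 ⟨hx.1, hx.2.1⟩
      exact ⟨x, hr, hx.unique (mv_spec ht hr)⟩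
  · rintro ⟨x, hx, rfl⟩
    exact Or.inr ⟨ht, ht, x, mv_spec ht hx⟩

def RH.snoc {n : ℕ} {f : Fin (n+1) → ℕ} {P : Partition} (ht : 0 < f (Fin.last n))
    (z : Σ x : {x // x ∈ rem P (f (Fin.last n))},
      RH n (fun i => f i.castSucc) (mv P x.1 (f (Fin.last n)))) : RH (n+1) f P :=
  ⟨Fin.snoc (α := fun _ => Partition) z.2.1 P, by
    refine ⟨?_, by simp, ?_⟩
    · have := Fin.snoc_castSucc (α := fun _ => Partition) P z.2.1 0
      exact this.trans z.2.2.1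
    · intro j
      refine Fin.lastCases ?_ (fun j => ?_) j
      · rw [Fin.snoc_castSucc, Fin.succ_last, Fin.snoc_last, z.2.2.2.1, IsStep.mv_iff ht]
        exact ⟨_, z.1.2, rfl⟩
      · rw [Fin.snoc_castSucc, Fin.succ_castSucc, Fin.snoc_castSucc]
        exact z.2.2.2.2 j⟩

theorem RH.snoc_bij {n : ℕ} {f : Fin (n+1) → ℕ} {P : Partition} (ht : 0 < f (Fin.last n)) :
    Function.Bijective (RH.snoc (P := P) ht) := by
  constructor
  · rintro ⟨⟨x, hx⟩, c⟩ ⟨⟨x', hx'⟩, c'⟩ h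
    have h1 := congrArg Subtype.val h
    simp only [RH.snoc] at h1
    have h2 : c.1 = c'.1 := by
      funext i
      have := congrFun h1 i.castSucc
      simpa [Fin.snoc_castSucc] using this
    have h3 : mv P x (f (Fin.last n)) = mv P x' (f (Fin.last n)) := by
      rw [← c.2.2.1, ← c'.2.2.1, h2]
    have e1 := mv_spec ht hx
    have e2 := mv_spec ht hx'
    rw [← h3] at e2
    obtain rfl := e1.x_unique ht e2
    congr 1
    exact Subtype.ext h2
  · rintro ⟨c, h0, h1, h2⟩
    have hs := h2 (Fin.last n)
    rw [Fin.succ_last, h1, IsStep.mv_iff ht] at hs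
    obtain ⟨x, hx, hR⟩ := hs
    refine ⟨⟨⟨x, hx⟩, ⟨fun i => c i.castSucc, h0, hR, ?_⟩⟩, ?_⟩
    · intro j
      have := h2 j.castSucc
      rwa [Fin.succ_castSucc] at this
    · apply Subtype.ext
      simp only [RH.snoc]
      funext i
      refine Fin.lastCases ?_ (fun j => ?_) i
      · rw [Fin.snoc_last, h1]
      · rw [Fin.snoc_castSucc]

theorem RH.snoc_ht {n : ℕ} {f : Fin (n+1) → ℕ} {P : Partition} (ht : 0 < f (Fin.last n)) (z) :
    (RH.snoc (P := P) ht z).ht = z.2.ht + (btwSet P z.1.1 (f (Fin.last n))).ncard := by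
  rw [RH.ht, Fin.sum_univ_castSucc, RH.ht]
  congr 1
  · refine Finset.sum_congr rfl fun j _ => ?_
    simp only [RH.snoc]
    rw [Fin.snoc_castSucc, Fin.succ_castSucc, Fin.snoc_castSucc]
  · simp only [RH.snoc]
    rw [Fin.snoc_castSucc, Fin.succ_last, Fin.snoc_last, z.2.2.2.1]
    exact (mv_spec ht z.1.2).height ht

theorem RH.main (n : ℕ) : ∀ (f : Fin n → ℕ) (P : Partition), (∀ i, 0 < f i) →
    Finite (RH n f P) ∧ ∑ᶠ c : RH n f P, (-1 : ℤ) ^ c.ht = X (List.ofFn f).reverse P := by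
  induction n with
  | zero =>
    intro f P _
    have hsub : Subsingleton (RH 0 f P) := ⟨fun a b => by
      apply Subtype.ext; funext i
      have : i = 0 := Fin.eq_zero i
      rw [this, a.2.1, b.2.1]⟩
    refine ⟨inferInstance, ?_⟩
    simp only [List.ofFn_zero, List.reverse_nil, X]
    split_ifs with h
    · subst h
      let c : RH 0 f Partition.empty := ⟨fun _ => Partition.empty, rfl, rfl, fun j => j.elim0⟩
      have : Unique (RH 0 f Partition.empty) := ⟨⟨c⟩, fun a => Subsingleton.elim _ _⟩
      rw [finsum_unique]
      simp [RH.ht]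
    · have : IsEmpty (RH 0 f P) := ⟨fun c => h (c.2.2.1.symm.trans c.2.1)⟩
      exact finsum_of_isEmpty _
  | succ n ih =>
    intro f P hf
    have ht := hf (Fin.last n)
    have fin1 := fun R => (ih (fun i => f i.castSucc) R (fun i => hf _)).1
    let e := Equiv.ofBijective _ (RH.snoc_bij (P := P) ht)
    have hfin : Finite (RH (n+1) f P) := Finite.of_equiv _ e
    refine ⟨hfin, ?_⟩
    have := Fintype.ofFinite (RH (n+1) f P)
    have := fun R => Fintype.ofFinite (RH n (fun i => f i.castSucc) R)
    rw [finsum_eq_sum_of_fintype, ← e.sum_comp, Fintype.sum_sigma, List.ofFn_succ',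
      List.concat_eq_append, List.reverse_append]
    simp only [List.reverse_cons, List.reverse_nil, List.nil_append, List.singleton_append, X]
    rw [← Finset.sum_coe_sort (rem P (f (Fin.last n)))]
    refine Finset.sum_congr rfl fun x _ => ?_
    rw [← (ih _ _ (fun i => hf _)).2, finsum_eq_sum_of_fintype, Finset.mul_sum]
    refine Finset.sum_congr rfl fun c _ => ?_
    show (-1 : ℤ) ^ (RH.snoc ht ⟨x, c⟩).ht = _
    rw [RH.snoc_ht, pow_add, mul_comm]

theorem chiAux_eq (P : Partition) (μ : List ℕ) (hμ : ∀ i ∈ μ, 0 < i) :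
    chiAux P μ = X μ.reverse P := by
  have h := (RH.main μ.length μ.get P (fun i => hμ _ (List.get_mem _ _))).2
  rw [List.ofFn_get] at h
  rw [← h, chiAux]
  let e : RHT P μ ≃ RH μ.length μ.get P :=
    { toFun := fun T => ⟨T.chain, T.chain_zero, T.chain_last, T.step⟩
      invFun := fun c => ⟨c.1, c.2.1, c.2.2.1, c.2.2.2⟩
      left_inv := fun T => rfl
      right_inv := fun c => rfl }
  exact finsum_eq_of_bijective e e.bijective (fun T => rfl)

theorem chi_eq (P : Partition) (μ : Multiset ℕ) (hμ : ∀ i ∈ μ, 0 < i) :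
    chi P μ = X (μ.sort (· ≤ ·)) P := by
  rw [chi, chiAux_eq, typeList, List.reverse_reverse]
  intro i hi
  apply hμ
  simpa [typeList] using hi
def QuotD (k : ℕ) (P : Partition) (Q : Fin k → Partition) (d : Fin k → ℤ) : Prop :=
  ∀ (i : Fin k) (j : ℤ), isZeroAt (Q i) j ↔ isZeroAt P (((i : ℕ) : ℤ) + (j + d i) * (k : ℤ))

theorem fin_emod {k : ℕ} (i : Fin k) (j : ℤ) : (((i : ℕ) : ℤ) + j * (k : ℤ)) % k = (i : ℕ) := by
  rw [Int.add_mul_emod_self_right]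
  exact Int.emod_eq_of_lt (by omega) (by have := i.2; omega)

theorem fin_ediv {k : ℕ} (i : Fin k) (j : ℤ) : (((i : ℕ) : ℤ) + j * (k : ℤ)) / k = j := by
  have := i.2
  rw [Int.add_mul_ediv_right _ _ (by omega), Int.ediv_eq_zero_of_lt (by omega) (by omega), zero_add]

theorem fin_inj {k : ℕ} {i i' : Fin k} {j j' : ℤ}
    (h : ((i : ℕ) : ℤ) + j * (k : ℤ) = ((i' : ℕ) : ℤ) + j' * (k : ℤ)) : i = i' ∧ j = j' := by
  constructor
  · have h1 := fin_emod i j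
    rw [h, fin_emod] at h1
    apply Fin.ext; omega
  · have h1 := fin_ediv i j
    rw [h, fin_ediv] at h1
    omega

theorem fin_surj {k : ℕ} (hk : 0 < k) (x : ℤ) : ∃ (i : Fin k) (j : ℤ),
    ((i : ℕ) : ℤ) + j * (k : ℤ) = x := by
  have h1 := Int.emod_nonneg x (show (k : ℤ) ≠ 0 by omega)
  have h2 := Int.emod_lt_of_pos x (show (0 : ℤ) < k by omega)
  refine ⟨⟨(x % k).toNat, by omega⟩, x / k, ?_⟩
  have := Int.emod_add_ediv_mul x k
  simp only
  rw [Int.toNat_of_nonneg h1]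
  exact this

theorem QuotD.rem_iff {k : ℕ} {P : Partition} {Q : Fin k → Partition} {d : Fin k → ℤ}
    (h : QuotD k P Q d) (i : Fin k) (j : ℤ) (t : ℕ) :
    j ∈ rem (Q i) t ↔ ((i : ℕ) : ℤ) + (j + d i) * (k : ℤ) ∈ rem P (k * t) := by
  rw [mem_rem, mem_rem, h, h]
  have : ((i : ℕ) : ℤ) + (j - t + d i) * (k : ℤ) =
    ((i : ℕ) : ℤ) + (j + d i) * (k : ℤ) - ((k * t : ℕ) : ℤ) := by push_cast; ring
  rw [this]

theorem QuotD.move {k : ℕ} {P R : Partition} {Q : Fin k → Partition} {d : Fin k → ℤ}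
    (h : QuotD k P Q d) (i : Fin k) (j : ℤ) (t : ℕ) {R' : Partition}
    (hR : Mv P R (((i : ℕ) : ℤ) + (j + d i) * (k : ℤ)) (k * t)) (hR' : Mv (Q i) R' j t) :
    QuotD k R (Function.update Q i R') d := by
  intro i' j'
  rw [hR.2.2]
  have e : ((i : ℕ) : ℤ) + (j + d i) * (k : ℤ) - ((k * t : ℕ) : ℤ) =
    ((i : ℕ) : ℤ) + (j - t + d i) * (k : ℤ) := by push_cast; ring
  rw [e]
  by_cases hi : i' = i
  · subst hi
    rw [Function.update_self, hR'.2.2, h]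
    constructor
    · rintro (rfl | ⟨h1, h2⟩)
      · left; rfl
      · right; refine ⟨h1, fun h3 => h2 ?_⟩
        have := (fin_inj h3).2
        omega
    · rintro (h1 | ⟨h1, h2⟩)
      · left
        have := (fin_inj h1).2
        omega
      · right; exact ⟨h1, fun h3 => h2 (by rw [h3])⟩
  · rw [Function.update_of_ne hi, h]
    constructor
    · intro h1
      right
      exact ⟨h1, fun h3 => hi (fin_inj h3).1⟩
    · rintro (h1 | ⟨h1, h2⟩)
      · exact absurd (fin_inj h1).1 hi
      · exact h1

theorem QuotD.empty_zero {k : ℕ} {Q : Fin k → Partition} {d : Fin k → ℤ}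
    (h : QuotD k Partition.empty Q d) : d = fun _ => 0 := by
  funext i
  have hk := i.2
  have h1 : ∀ j, isZeroAt (Q i) j ↔ j < - d i := by
    intro j
    rw [h, isZeroAt_empty]
    constructor
    · intro h2
      by_contra h3
      have : 0 ≤ (j + d i) * (k : ℤ) := mul_nonneg (by omega) (by omega)
      omega
    · intro h2
      have : (j + d i) * (k : ℤ) ≤ -1 * k := mul_le_mul_of_nonneg_right (by omega) (by omega)
      omega
  obtain ⟨N, hN⟩ := filled_exists (Q i)
  have aQ := zpos_strictAnti (Q i)
  -- consider row N
  have e1 : ∀ n, zpos (Q i) n < - d i := fun n => (h1 _).1 ⟨n, rfl⟩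
  have e2 : zpos (Q i) 0 = - d i - 1 := by
    obtain ⟨n, hn⟩ := (h1 (- d i - 1)).2 (by omega)
    have := aQ.antitone (Nat.zero_le n)
    have := e1 0
    omega
  have e3 : ∀ n, zpos (Q i) n = - d i - 1 - n := by
    intro n
    induction n with
    | zero => simpa using e2
    | succ n ih =>
      obtain ⟨m, hm⟩ := (h1 (- d i - 1 - (n + 1))).2 (by omega)
      have h4 : n < m := aQ.lt_iff_gt.1 (by omega)
      have h5 := aQ.antitone (show n + 1 ≤ m by omega)
      have h6 := aQ (Nat.lt_succ_self n)
      simp only [Nat.succ_eq_add_one] at h6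
      push_cast
      omega
  have := e3 N
  rw [hN N le_rfl] at this
  omega

theorem QuotD.empty_iff {k : ℕ} (hk : 0 < k) {P : Partition} {Q : Fin k → Partition}
    (h : QuotD k P Q (fun _ => 0)) : P = Partition.empty ↔ ∀ i, Q i = Partition.empty := by
  have key : ∀ (i : Fin k) (j : ℤ), ((i : ℕ) : ℤ) + j * (k : ℤ) < 0 ↔ j < 0 := by
    intro i j
    have := i.2
    constructor
    · intro h2
      by_contra h3
      have : 0 ≤ j * (k : ℤ) := mul_nonneg (by omega) (by omega)
      omega
    · intro h2
      have : j * (k : ℤ) ≤ -1 * k := mul_le_mul_of_nonneg_right (by omega) (by omega)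
      omega
  constructor
  · rintro rfl i
    apply isZeroAt_ext
    intro j
    rw [h, isZeroAt_empty, isZeroAt_empty, add_zero, key]
  · intro hQ
    apply isZeroAt_ext
    intro x
    obtain ⟨i, j, rfl⟩ := fin_surj hk x
    have := h i j
    rw [add_zero] at this
    rw [← this, hQ, isZeroAt_empty, isZeroAt_empty, key]

def Filled (M : ℕ) (P : Partition) : Prop := ∀ x : ℤ, x < -(M : ℤ) → isZeroAt P x

open Classical in
noncomputable def Zf (M : ℕ) (P : Partition) : Finset ℤ :=
  (Finset.Icc (-(M : ℤ)) (P.parts 0)).filter (fun x => isZeroAt P x)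

theorem mem_Zf {M : ℕ} {P : Partition} {x : ℤ} : x ∈ Zf M P ↔ -(M : ℤ) ≤ x ∧ isZeroAt P x := by
  simp only [Zf, Finset.mem_filter, Finset.mem_Icc]
  constructor
  · rintro ⟨⟨h1, _⟩, h2⟩; exact ⟨h1, h2⟩
  · rintro ⟨h1, h2⟩; exact ⟨⟨h1, isZeroAt_le h2⟩, h2⟩

theorem Mv.filled {M : ℕ} {P R : Partition} {x : ℤ} {t : ℕ} (h : Mv P R x t) (hM : Filled M P) :
    Filled M R := by
  have hy : -(M : ℤ) ≤ x - t := by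
    by_contra hh
    exact h.2.1 (hM _ (by omega))
  intro z hz
  rw [h.2.2]
  exact Or.inr ⟨hM z hz, by omega⟩

theorem Mv.Zf {M : ℕ} {P R : Partition} {x : ℤ} {t : ℕ} (h : Mv P R x t) (hM : Filled M P) :
    x ∈ Zf M P ∧ x - t ∉ Zf M P ∧ Zf M R = insert (x - t) ((Zf M P).erase x) := by
  have hy : -(M : ℤ) ≤ x - t := by
    by_contra hh
    exact h.2.1 (hM _ (by omega))
  refine ⟨mem_Zf.2 ⟨by omega, h.1⟩, fun h' => h.2.1 (mem_Zf.1 h').2, ?_⟩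
  ext z
  rw [mem_Zf, h.2.2, Finset.mem_insert, Finset.mem_erase, mem_Zf]
  constructor
  · rintro ⟨h1, h2 | h2⟩
    · exact Or.inl h2
    · exact Or.inr ⟨h2.2, h1, h2.1⟩
  · rintro (rfl | h2)
    · exact ⟨hy, Or.inl rfl⟩
    · exact ⟨h2.2.1, Or.inr ⟨h2.2.2, h2.1⟩⟩

def gs (k : ℕ) (a b : ℤ) : ℤ := if b < a ∧ a % k < b % k then -1 else 1

def eps (k : ℕ) (Z : Finset ℤ) : ℤ := ∏ a ∈ Z, ∏ b ∈ Z, gs k a b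

theorem eps_insert (k : ℕ) (W : Finset ℤ) (x : ℤ) (hx : x ∉ W) :
    eps k (insert x W) = eps k W * ∏ b ∈ W, (gs k x b * gs k b x) := by
  have hg : gs k x x = 1 := by simp [gs]
  rw [eps, Finset.prod_insert hx, Finset.prod_insert hx, hg, one_mul]
  rw [Finset.prod_congr rfl (fun a _ => Finset.prod_insert (f := fun b => gs k a b) hx),
    Finset.prod_mul_distrib, Finset.prod_mul_distrib, eps]
  ring

theorem gs_sq (k : ℕ) (a b : ℤ) : gs k a b * gs k a b = 1 := by
  unfold gs; split_ifs <;> rfl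

theorem eps_sq (k : ℕ) (W : Finset ℤ) : eps k W * eps k W = 1 := by
  rw [eps, ← Finset.prod_mul_distrib]
  apply Finset.prod_eq_one
  intro a _
  rw [← Finset.prod_mul_distrib]
  exact Finset.prod_eq_one fun b _ => gs_sq k a b

theorem gs_flip (k : ℕ) (x y b : ℤ) (hyx : y < x) (hmod : y % k = x % k) (hbx : b ≠ x) (hby : b ≠ y) :
    (gs k x b * gs k b x) * (gs k y b * gs k b y) =
      if (y < b ∧ b < x) ∧ b % k ≠ x % k then -1 else 1 := by
  unfold gs
  rw [hmod]
  split_ifs <;> first | rfl | omega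

theorem sign_key {k M t : ℕ} (hk : 0 < k) (ht : 0 < t) {P R : Partition} {Q : Fin k → Partition}
    (hQ : QuotD k P Q (fun _ => 0)) (hM : Filled M P) (i : Fin k) (j : ℤ)
    (hR : Mv P R (((i : ℕ) : ℤ) + j * (k : ℤ)) (k * t)) :
    (-1 : ℤ) ^ (btwSet P (((i : ℕ) : ℤ) + j * (k : ℤ)) (k * t)).ncard =
      eps k (Zf M P) * eps k (Zf M R) * (-1) ^ (btwSet (Q i) j t).ncard := by
  classical
  obtain ⟨h1, h2, h3⟩ := hR.Zf hM
  have hxk := fin_emod i j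
  have hinj : ∀ j', ((i : ℕ) : ℤ) + j * (k : ℤ) = ((i : ℕ) : ℤ) + j' * (k : ℤ) → j = j' :=
    fun j' h => (fin_inj h).2
  have hkt : 0 < k * t := Nat.mul_pos hk ht
  have hyk : (((i : ℕ) : ℤ) + j * (k : ℤ) - ((k * t : ℕ) : ℤ)) =
    (((i : ℕ) : ℤ) + (j - t) * (k : ℤ)) := by push_cast; ring
  have hymod : (((i : ℕ) : ℤ) + j * (k : ℤ) - ((k * t : ℕ) : ℤ)) % k =
      (((i : ℕ) : ℤ) + j * (k : ℤ)) % k := by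
    rw [hyk, fin_emod, fin_emod]
  have hyM : -(M : ℤ) ≤ ((i : ℕ) : ℤ) + j * (k : ℤ) - ((k * t : ℕ) : ℤ) := by
    by_contra hh
    exact hR.2.1 (hM _ (by omega))
  set x := ((i : ℕ) : ℤ) + j * (k : ℤ) with hx
  set y := x - ((k * t : ℕ) : ℤ) with hy
  have hyx : y < x := by omega
  set W := (Zf M P).erase x with hW
  have hxW : x ∉ W := Finset.notMem_erase _ _
  have hyW : y ∉ W := fun h => h2 (Finset.mem_of_mem_erase h)
  have hP : eps k (Zf M P) = eps k W * ∏ b ∈ W, (gs k x b * gs k b x) := by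
    rw [← eps_insert k W x hxW, Finset.insert_erase h1]
  have hR' : eps k (Zf M R) = eps k W * ∏ b ∈ W, (gs k y b * gs k b y) := by
    rw [← eps_insert k W y hyW, h3]
  have hprod : eps k (Zf M P) * eps k (Zf M R) =
      (-1) ^ (W.filter (fun b => (y < b ∧ b < x) ∧ b % k ≠ x % k)).card := by
    rw [hP, hR']
    calc _ = (eps k W * eps k W) * ∏ b ∈ W, ((gs k x b * gs k b x) * (gs k y b * gs k b y)) := by
          rw [Finset.prod_mul_distrib (s := W) (f := fun b => gs k x b * gs k b x)]; ring
      _ = _ := by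
          rw [eps_sq, one_mul, Finset.prod_congr rfl (fun b hb => gs_flip k x y b hyx hymod
            (fun h => hxW (h ▸ hb)) (fun h => hyW (h ▸ hb))), Finset.prod_ite]
          simp
  have hb1 : (btwSet P x (k * t)).ncard = (W.filter (fun b => y < b ∧ b < x)).card := by
    rw [← Set.ncard_coe_finset]
    congr 1
    ext b
    simp only [btwSet, Set.mem_ofPred_eq, Finset.coe_filter, hW, Finset.mem_erase, mem_Zf]
    constructor
    · rintro ⟨h4, h5, h6⟩
      exact ⟨⟨by omega, by omega, h4⟩, h5, h6⟩
    · rintro ⟨⟨h4, h5, h6⟩, h7, h8⟩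
      exact ⟨h6, h7, h8⟩
  have hb2 : (btwSet (Q i) j t).ncard =
      (W.filter (fun b => (y < b ∧ b < x) ∧ b % k = x % k)).card := by
    rw [← Set.ncard_coe_finset]
    have hinj : Function.Injective (fun b : ℤ => ((i : ℕ) : ℤ) + b * (k : ℤ)) :=
      fun a b h => (fin_inj h).2
    rw [← Set.ncard_image_of_injective _ hinj]
    congr 1
    ext b
    simp only [btwSet, Set.mem_ofPred_eq, Finset.coe_filter, hW, Finset.mem_erase, mem_Zf,
      Set.mem_image]
    have hkz : (0 : ℤ) < k := by omega
    constructor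
    · rintro ⟨b', ⟨h4, h5, h6⟩, rfl⟩
      rw [hQ, add_zero] at h4
      have e1 : (((i : ℕ) : ℤ) + b' * (k : ℤ)) < x := by
        have := mul_lt_mul_of_pos_right h6 hkz
        omega
      have e2 : y < (((i : ℕ) : ℤ) + b' * (k : ℤ)) := by
        have := mul_lt_mul_of_pos_right h5 hkz
        omega
      exact ⟨⟨by omega, by omega, h4⟩, ⟨e2, e1⟩, by rw [fin_emod, hxk]⟩
    · rintro ⟨⟨h4, h5, h6⟩, ⟨h7, h8⟩, h9⟩
      obtain ⟨i', b', rfl⟩ := fin_surj hk b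
      rw [fin_emod, hxk] at h9
      obtain rfl : i' = i := Fin.ext (by omega)
      refine ⟨b', ⟨?_, ?_, ?_⟩, rfl⟩
      · rw [hQ, add_zero]; exact h6
      · exact lt_of_mul_lt_mul_right (show (j - t) * (k : ℤ) < b' * k by omega) hkz.le
      · exact lt_of_mul_lt_mul_right (show b' * (k : ℤ) < j * k by omega) hkz.le
  rw [hprod, hb1, hb2, ← pow_add]
  congr 1
  rw [← Finset.filter_filter (fun b => y < b ∧ b < x) (fun b => b % k = x % k),
    ← Finset.filter_filter (fun b => y < b ∧ b < x) (fun b => b % k ≠ x % k), add_comm]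
  exact (Finset.card_filter_add_card_filter_not _).symm

open Classical in
noncomputable def Y {k : ℕ} : List ℕ → (Fin k → Partition) → ℤ
  | [], Q => if ∀ i, Q i = Partition.empty then 1 else 0
  | t :: l, Q => ∑ i, ∑ j ∈ rem (Q i) t, (-1) ^ (btwSet (Q i) j t).ncard *
      Y l (Function.update Q i (mv (Q i) j t))

theorem X_eq_Y {k M : ℕ} (hk : 0 < k) (l : List ℕ) (hl : ∀ t ∈ l, 0 < t) :
    ∀ (P : Partition) (Q : Fin k → Partition), QuotD k P Q (fun _ => 0) → Filled M P →
      X (l.map fun x => k * x) P = eps k (Zf M P) * eps k (Zf M Partition.empty) * Y l Q := by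
  induction l with
  | nil =>
    intro P Q hQ hM
    have hiff := hQ.empty_iff hk
    simp only [List.map_nil, X, Y]
    by_cases h : P = Partition.empty
    · rw [if_pos h, if_pos (hiff.1 h), h, eps_sq]; rfl
    · rw [if_neg h, if_neg (fun h' => h (hiff.2 h')), mul_zero]
  | cons t l ih =>
    intro P Q hQ hM
    have ht := hl t (by simp)
    have hkt : 0 < k * t := Nat.mul_pos hk ht
    simp only [List.map_cons, X, Y]
    rw [Finset.sum_sigma', Finset.mul_sum]
    symm
    refine Finset.sum_bij (fun z _ => ((z.1 : ℕ) : ℤ) + z.2 * (k : ℤ)) ?_ ?_ ?_ ?_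
    · rintro ⟨i, j⟩ hz
      have := (hQ.rem_iff i j t).1 (Finset.mem_sigma.1 hz).2
      simpa using this
    · rintro ⟨i, j⟩ _ ⟨i', j'⟩ _ h
      obtain ⟨rfl, rfl⟩ := fin_inj h
      rfl
    · intro x hx
      obtain ⟨i, j, rfl⟩ := fin_surj hk x
      refine ⟨⟨i, j⟩, Finset.mem_sigma.2 ⟨Finset.mem_univ _, (hQ.rem_iff i j t).2 (by simpa using hx)⟩, rfl⟩
    · rintro ⟨i, j⟩ hz
      have hj := (Finset.mem_sigma.1 hz).2
      have hx := (hQ.rem_iff i j t).1 hj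
      simp only [add_zero] at hx hj ⊢
      have m1 := mv_spec hkt hx
      have m2 := mv_spec ht hj
      have hQ' := hQ.move i j t (R := mv P (((i : ℕ) : ℤ) + j * (k : ℤ)) (k * t)) (by simpa using m1) m2
      rw [ih (fun t ht => hl t (by simp [ht])) _ _ hQ' (m1.filled hM), sign_key hk ht hQ hM i j m1]
      have := eps_sq k (Zf M (mv P (((i : ℕ) : ℤ) + j * (k : ℤ)) (k * t)))
      linear_combination (-(eps k (Zf M P)) * eps k (Zf M Partition.empty) *
        (-1) ^ (btwSet (Q i) j t).ncard * Y l (Function.update Q i (mv (Q i) j t))) * this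
theorem Zf_sum {M : ℕ} {P : Partition} (hM : ∀ n, M ≤ n → zpos P n = -n - 1) :
    ∑ x ∈ Zf M P, x = P.size + ∑ n ∈ Finset.range M, (-(n : ℤ) - 1) := by
  have aP := zpos_strictAnti P
  have hz : Zf M P = (Finset.range M).image (zpos P) := by
    ext x
    rw [mem_Zf, Finset.mem_image]
    constructor
    · rintro ⟨h1, n, rfl⟩
      refine ⟨n, ?_, rfl⟩
      rw [Finset.mem_range]
      by_contra hh
      rw [hM n (by omega)] at h1
      omega
    · rintro ⟨n, hn, rfl⟩
      rw [Finset.mem_range] at hn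
      have := aP hn
      rw [hM M le_rfl] at this
      exact ⟨by omega, n, rfl⟩
  have hs : P.size = ∑ n ∈ Finset.range M, P.parts n := by
    rw [Partition.size]
    apply finsum_eq_sum_of_support_subset
    intro n hn
    rw [Function.mem_support] at hn
    rw [Finset.coe_range, Set.mem_Iio]
    by_contra hh
    have := hM n (by omega)
    simp only [zpos] at this
    omega
  rw [hz, Finset.sum_image (fun a _ b _ h => aP.injective h), hs]
  push_cast
  rw [← Finset.sum_add_distrib]
  refine Finset.sum_congr rfl fun n _ => ?_
  simp only [zpos]; ring

theorem Mv.size {P R : Partition} {x : ℤ} {t : ℕ} (h : Mv P R x t) : P.size = R.size + t := by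
  obtain ⟨N1, hN1⟩ := filled_exists P
  obtain ⟨N2, hN2⟩ := filled_exists R
  have e1 := Zf_sum (M := N1 + N2) (P := P) (fun n hn => hN1 n (by omega))
  have e2 := Zf_sum (M := N1 + N2) (P := R) (fun n hn => hN2 n (by omega))
  obtain ⟨h1, h2, h3⟩ := h.Zf (M := N1 + N2) (fun x hx => isZeroAt_of_lt hN1 (by push_cast at hx; omega))
  rw [h3, Finset.sum_insert (fun h => h2 (Finset.mem_of_mem_erase h))] at e2
  have e3 := Finset.add_sum_erase _ (fun x => x) h1
  omega

theorem size_empty : Partition.empty.size = 0 := by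
  simp [Partition.size, Partition.empty]

theorem X_size (l : List ℕ) (hl : ∀ t ∈ l, 0 < t) : ∀ P, X l P ≠ 0 → l.sum = P.size := by
  induction l with
  | nil =>
    intro P h
    simp only [X] at h
    have : P = Partition.empty := by by_contra hh; exact h (if_neg hh)
    rw [this, size_empty]; rfl
  | cons t l ih =>
    intro P h
    simp only [X] at h
    obtain ⟨x, hx, hne⟩ := Finset.exists_ne_zero_of_sum_ne_zero h
    have := ih (fun t ht => hl t (by simp [ht])) _ (right_ne_zero_of_mul hne)
    rw [(mv_spec (hl t (by simp)) hx).size, ← this, List.sum_cons, add_comm]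

theorem zpart_cons (t : ℕ) (μ : Multiset ℕ) :
    zpart (t ::ₘ μ) = zpart μ * (t * (μ.count t + 1)) := by
  classical
  have key : ∀ ν : Multiset ℕ, ν.toFinset ⊆ insert t μ.toFinset →
      ∏ j ∈ ν.toFinset, (ν.count j).factorial =
        (ν.count t).factorial * ∏ j ∈ μ.toFinset.erase t, (ν.count j).factorial := by
    intro ν h
    rw [Finset.prod_subset h, ← Finset.mul_prod_erase _ _ (Finset.mem_insert_self t μ.toFinset),
      Finset.erase_insert_eq_erase]
    intro x _ hx
    rw [Multiset.mem_toFinset] at hx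
    rw [Multiset.count_eq_zero_of_notMem hx, Nat.factorial_zero]
  rw [zpart, zpart, key (t ::ₘ μ) (by simp), key μ (Finset.subset_insert _ _), Multiset.prod_cons,
    Multiset.count_cons_self, Nat.factorial_succ]
  rw [Finset.prod_congr rfl (g := fun j => (μ.count j).factorial)]
  · ring
  · intro j hj
    rw [Multiset.count_cons_of_ne (Finset.ne_of_mem_erase hj)]

theorem zpart_pos (μ : Multiset ℕ) (h : ∀ t ∈ μ, 0 < t) : 0 < zpart μ := by
  refine Nat.mul_pos ?_ (Finset.prod_pos fun j _ => Nat.factorial_pos _)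
  apply Nat.pos_of_ne_zero
  intro h0
  rw [Multiset.prod_eq_zero_iff] at h0
  exact lt_irrefl _ (h 0 h0)

open Classical in
noncomputable def AA (k : ℕ) (μ : Multiset ℕ) : Finset (Fin k → Multiset ℕ) :=
  (Fintype.piFinset fun _ : Fin k => μ.powerset.toFinset).filter (fun ν => ∑ i, ν i = μ)

theorem le_of_sum {k : ℕ} {ν : Fin k → Multiset ℕ} {μ : Multiset ℕ} (h : ∑ i, ν i = μ) (i : Fin k) :
    ν i ≤ μ := by
  rw [← h]
  exact Finset.single_le_sum (fun _ _ => Multiset.zero_le _) (Finset.mem_univ i)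

theorem mem_AA {k : ℕ} {ν : Fin k → Multiset ℕ} {μ : Multiset ℕ} :
    ν ∈ AA k μ ↔ ∑ i, ν i = μ := by
  rw [AA, Finset.mem_filter, and_iff_right_iff_imp]
  intro h
  rw [Fintype.mem_piFinset]
  intro i
  rw [Multiset.mem_toFinset, Multiset.mem_powerset]
  exact le_of_sum h i

noncomputable def XF {k : ℕ} (Q : Fin k → Partition) (ν : Fin k → Multiset ℕ) : ℤ :=
  ∏ i, X ((ν i).sort (· ≤ ·)) (Q i)

noncomputable def cf {k : ℕ} (μ : Multiset ℕ) (ν : Fin k → Multiset ℕ) : ℚ :=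
  (zpart μ : ℚ) / ∏ i, (zpart (ν i) : ℚ)

theorem XF_cons {k : ℕ} (Q : Fin k → Partition) (ν : Fin k → Multiset ℕ) (i : Fin k) (t : ℕ)
    (h : ∀ s ∈ ν i, t ≤ s) :
    XF Q (Function.update ν i (t ::ₘ ν i)) =
      ∑ j ∈ rem (Q i) t, (-1) ^ (btwSet (Q i) j t).ncard *
        XF (Function.update Q i (mv (Q i) j t)) ν := by
  rw [XF, ← Finset.mul_prod_erase _ _ (Finset.mem_univ i), Function.update_self,
    Multiset.sort_cons t (ν i) (· ≤ ·) h]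
  simp only [X]
  rw [Finset.sum_mul]
  refine Finset.sum_congr rfl fun j _ => ?_
  rw [XF, ← Finset.mul_prod_erase _ _ (Finset.mem_univ i), Function.update_self, mul_assoc]
  congr 2
  refine Finset.prod_congr rfl fun i' hi' => ?_
  rw [Function.update_of_ne (Finset.ne_of_mem_erase hi'), Function.update_of_ne (Finset.ne_of_mem_erase hi')]

theorem sum_update_cons {k : ℕ} (ν : Fin k → Multiset ℕ) (i : Fin k) (t : ℕ) :
    ∑ i', Function.update ν i (t ::ₘ ν i) i' = t ::ₘ ∑ i', ν i' := by
  rw [← Finset.add_sum_erase _ _ (Finset.mem_univ i), Function.update_self,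
    ← Finset.add_sum_erase _ (fun i' => ν i') (Finset.mem_univ i), Multiset.cons_add]
  congr 2
  refine Finset.sum_congr rfl fun i' hi' => ?_
  rw [Function.update_of_ne (Finset.ne_of_mem_erase hi')]

theorem cf_cons {k : ℕ} (μ : Multiset ℕ) (ν : Fin k → Multiset ℕ) (i : Fin k) (t : ℕ) (ht : 0 < t)
    (hν : ∀ i, ∀ s ∈ ν i, 0 < s) :
    cf μ ν = (((t ::ₘ ν i).count t : ℚ) / ((t ::ₘ μ).count t : ℚ)) *
      cf (t ::ₘ μ) (Function.update ν i (t ::ₘ ν i)) := by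
  have h1 : ∏ i', (zpart (Function.update ν i (t ::ₘ ν i) i') : ℚ) =
      (∏ i', (zpart (ν i') : ℚ)) * (t * ((ν i).count t + 1)) := by
    rw [← Finset.mul_prod_erase _ _ (Finset.mem_univ i), Function.update_self, zpart_cons,
      ← Finset.mul_prod_erase _ (fun i' => (zpart (ν i') : ℚ)) (Finset.mem_univ i)]
    rw [Finset.prod_congr rfl (g := fun i' => (zpart (ν i') : ℚ))]
    · push_cast; ring
    · intro i' hi'
      rw [Function.update_of_ne (Finset.ne_of_mem_erase hi')]
  have h2 : ∏ i', (zpart (ν i') : ℚ) ≠ 0 := by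
    rw [Finset.prod_ne_zero_iff]
    intro i' _
    have := zpart_pos (ν i') (hν i')
    positivity
  rw [cf, cf, h1, zpart_cons, Multiset.count_cons_self, Multiset.count_cons_self]
  have h3 : (t : ℚ) ≠ 0 := by positivity
  have h4 : ((ν i).count t + 1 : ℚ) ≠ 0 := by positivity
  have h5 : (μ.count t + 1 : ℚ) ≠ 0 := by positivity
  push_cast
  field_simp

theorem Y_eq {k : ℕ} (l : List ℕ) (hl : ∀ t ∈ l, 0 < t) (hs : l.Pairwise (· ≤ ·)) :
    ∀ (Q : Fin k → Partition), (Y l Q : ℚ) = ∑ ν ∈ AA k (l : Multiset ℕ), cf l ν * XF Q ν := by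
  induction l with
  | nil =>
    intro Q
    have hA : AA k ((([] : List ℕ)) : Multiset ℕ) = {fun _ => 0} := by
      ext ν
      rw [mem_AA, Finset.mem_singleton, Multiset.coe_nil, Finset.sum_eq_zero_iff]
      constructor
      · intro h; funext i; exact h i (Finset.mem_univ i)
      · rintro rfl; simp
    rw [hA, Finset.sum_singleton]
    have hz : zpart 0 = 1 := by simp [zpart]
    simp only [Y, cf, XF, Multiset.coe_nil, hz, Multiset.sort_zero, X]
    by_cases h : ∀ i, Q i = Partition.empty
    · simp [h]
    · rw [if_neg h]
      push Not at h
      obtain ⟨i, hi⟩ := h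
      classical
      have h0 : ∏ i, (if Q i = Partition.empty then (1 : ℤ) else 0) = 0 :=
        Finset.prod_eq_zero (Finset.mem_univ i) (if_neg hi)
      rw [h0]
      simp
  | cons t l ih =>
    intro Q
    have ht := hl t (by simp)
    have hl' : ∀ s ∈ l, 0 < s := fun s hs => hl s (by simp [hs])
    rw [List.pairwise_cons] at hs
    simp only [Y]
    push_cast
    have e1 : ∀ i : Fin k, ∑ j ∈ rem (Q i) t, (-1 : ℚ) ^ (btwSet (Q i) j t).ncard *
        (Y l (Function.update Q i (mv (Q i) j t)) : ℚ) =
        ∑ ν ∈ AA k (l : Multiset ℕ), cf l ν * XF Q (Function.update ν i (t ::ₘ ν i)) := by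
      intro i
      simp only [ih hl' hs.2, Finset.mul_sum]
      rw [Finset.sum_comm]
      refine Finset.sum_congr rfl fun ν hν => ?_
      rw [XF_cons Q ν i t (fun s hs' => hs.1 s (Multiset.mem_of_le (le_of_sum (mem_AA.1 hν) i) hs'))]
      push_cast
      rw [Finset.mul_sum]
      refine Finset.sum_congr rfl fun j _ => ?_
      ring
    rw [Finset.sum_congr rfl (fun i _ => e1 i)]
    have e2 : ∀ i : Fin k, ∑ ν ∈ AA k (l : Multiset ℕ), cf l ν * XF Q (Function.update ν i (t ::ₘ ν i)) =
        ∑ ν ∈ AA k (t ::ₘ (l : Multiset ℕ)), ((ν i).count t : ℚ) / ((t ::ₘ (l : Multiset ℕ)).count t : ℚ) *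
          (cf (t ::ₘ (l : Multiset ℕ)) ν * XF Q ν) := by
      intro i
      refine Finset.sum_of_injOn (fun ν => Function.update ν i (t ::ₘ ν i)) ?_ ?_ ?_ ?_
      · intro ν _ ν' _ h
        funext i'
        have := congrFun h i'
        simp only at this
        by_cases hi : i' = i
        · subst hi
          rw [Function.update_self, Function.update_self] at this
          exact (Multiset.cons_inj_right t).1 this
        · rwa [Function.update_of_ne hi, Function.update_of_ne hi] at this
      · intro ν hν
        rw [Finset.mem_coe, mem_AA] at *
        rw [sum_update_cons, hν]
      · intro ν hν hν'
        have : t ∉ ν i := by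
          intro hmem
          apply hν'
          refine ⟨Function.update ν i ((ν i).erase t), ?_, ?_⟩
          · rw [Finset.mem_coe, mem_AA]
            have h1 := sum_update_cons (Function.update ν i ((ν i).erase t)) i t
            rw [Function.update_self, Function.update_idem, Multiset.cons_erase hmem,
              Function.update_eq_self, mem_AA.1 hν] at h1
            exact ((Multiset.cons_inj_right t).1 h1).symm
          · simp only
            rw [Function.update_self, Function.update_idem, Multiset.cons_erase hmem,
              Function.update_eq_self]
        rw [Multiset.count_eq_zero_of_notMem this]
        simp
      · intro ν hν
        rw [cf_cons (l : Multiset ℕ) ν i t ht (fun i s hs' =>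
          hl' s (Multiset.mem_of_le (le_of_sum (mem_AA.1 hν) i) hs')), Function.update_self]
        ring
    rw [Finset.sum_congr rfl (fun i _ => e2 i), Finset.sum_comm]
    rw [← Multiset.cons_coe]
    refine Finset.sum_congr rfl fun ν hν => ?_
    rw [← Finset.sum_mul, ← Finset.sum_div, ← Nat.cast_sum, ← Multiset.count_sum', mem_AA.1 hν,
      div_self, one_mul]
    rw [Multiset.count_cons_self]
    positivity
theorem Mv.reach {k : ℕ} (hk : 0 < k) (t : ℕ) : ∀ {P R : Partition} {x : ℤ}, Mv P R x (k * (t + 1)) →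
    Relation.ReflTransGen (fun A B => IsRimHook A B k) P R := by
  induction t with
  | zero =>
    intro P R x h
    rw [zero_add, mul_one] at h
    exact Relation.ReflTransGen.single (isRimHook_iff.2 ⟨hk, x, h⟩)
  | succ t ih =>
    intro P R x h
    obtain ⟨h1, h2, h3⟩ := h
    have e : x - ((k * (t + 1 + 1) : ℕ) : ℤ) = x - k - ((k * (t + 1) : ℕ) : ℤ) := by
      push_cast; ring
    have hkt : 0 < k * (t + 1) := Nat.mul_pos hk (by omega)
    rw [e] at h2
    simp only [e] at h3
    by_cases hxk : isZeroAt P (x - k)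
    · obtain ⟨R1, hR1⟩ := Mv.exists hkt hxk h2
      refine (ih hR1).tail (isRimHook_iff.2 ⟨hk, x, ?_, ?_, ?_⟩)
      · rw [hR1.2.2]; exact Or.inr ⟨h1, by omega⟩
      · rw [hR1.2.2]; rintro (h | h)
        · omega
        · exact h.2 rfl
      · intro z
        rw [h3, hR1.2.2]
        constructor
        · rintro (h | ⟨h, h'⟩)
          · exact Or.inr ⟨Or.inl h, by omega⟩
          · by_cases hz : z = x - k
            · exact Or.inl hz
            · exact Or.inr ⟨Or.inr ⟨h, hz⟩, h'⟩
        · rintro (h | ⟨h | ⟨h, _⟩, h'⟩)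
          · subst h; exact Or.inr ⟨hxk, by omega⟩
          · exact Or.inl h
          · exact Or.inr ⟨h, h'⟩
    · obtain ⟨R1, hR1⟩ := Mv.exists hk h1 hxk
      refine Relation.ReflTransGen.head (isRimHook_iff.2 ⟨hk, x, hR1⟩) (ih (x := x - k) ⟨?_, ?_, ?_⟩)
      · rw [hR1.2.2]; exact Or.inl rfl
      · rw [hR1.2.2]; rintro (h | h)
        · omega
        · exact h2 h.1
      · intro z
        rw [h3, hR1.2.2]
        constructor
        · rintro (h | ⟨h, h'⟩)
          · exact Or.inl h
          · refine Or.inr ⟨Or.inr ⟨h, h'⟩, ?_⟩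
            rintro rfl
            exact hxk h
        · rintro (h | ⟨h | ⟨h, _⟩, h'⟩)
          · exact Or.inl h
          · exact absurd h h'
          · refine Or.inr ⟨h, by assumption⟩

theorem X_reach {k : ℕ} (hk : 0 < k) (l : List ℕ) (hl : ∀ t ∈ l, 0 < t) :
    ∀ P, X (l.map fun x => k * x) P ≠ 0 →
      Relation.ReflTransGen (fun A B => IsRimHook A B k) P Partition.empty := by
  induction l with
  | nil =>
    intro P h
    simp only [List.map_nil, X] at h
    have : P = Partition.empty := by by_contra hh; exact h (if_neg hh)
    rw [this]
  | cons t l ih =>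
    intro P h
    simp only [List.map_cons, X] at h
    obtain ⟨x, hx, hne⟩ := Finset.exists_ne_zero_of_sum_ne_zero h
    have h1 := ih (fun t ht => hl t (by simp [ht])) _ (right_ne_zero_of_mul hne)
    have ht := hl t (by simp)
    have h2 := mv_spec (Nat.mul_pos hk ht) hx
    obtain ⟨s, rfl⟩ : ∃ s, t = s + 1 := ⟨t - 1, by omega⟩
    exact (h2.reach hk).trans h1

theorem QuotD.step {k : ℕ} (hk : 0 < k) {P R : Partition} {Q : Fin k → Partition} {d : Fin k → ℤ}
    (h : QuotD k P Q d) (hR : IsRimHook P R k) : ∃ Q', QuotD k R Q' d := by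
  obtain ⟨_, x, hx⟩ := isRimHook_iff.1 hR
  obtain ⟨i, j, rfl⟩ := fin_surj hk x
  have e : j = (j - d i) + d i := by ring
  rw [e] at hx
  have h1 : (((i : ℕ) : ℤ) + ((j - d i) + d i) * (k : ℤ)) ∈ rem P (k * 1) := by
    rw [mul_one]; exact mem_rem.2 ⟨hx.1, hx.2.1⟩
  have h2 := (h.rem_iff i (j - d i) 1).2 h1
  exact ⟨_, h.move i (j - d i) 1 (by rwa [mul_one]) (mv_spec one_pos h2)⟩

theorem QuotD.reach {k : ℕ} (hk : 0 < k) {P R : Partition} {Q : Fin k → Partition} {d : Fin k → ℤ}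
    (h : QuotD k P Q d) (hR : Relation.ReflTransGen (fun A B => IsRimHook A B k) P R) :
    ∃ Q', QuotD k R Q' d := by
  induction hR with
  | refl => exact ⟨Q, h⟩
  | tail _ h2 ih =>
    obtain ⟨Q', hQ'⟩ := ih
    exact hQ'.step hk h2

theorem cyc_exists (L m m' : ℕ) (hm : m ≤ m') (hL : m' < L) :
    ∃ c : Equiv.Perm (Fin L), (∀ i, ((c i : Fin L) : ℕ) = cycleFun m m' i) ∧
      Equiv.Perm.sign c = (-1) ^ (m' - m) := by
  induction m', hm using Nat.le_induction with
  | base =>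
    refine ⟨1, fun i => ?_, by simp⟩
    simp only [cycleFun, Equiv.Perm.coe_one, id]
    split_ifs <;> omega
  | succ m' hm ih =>
    obtain ⟨c, hc, hs⟩ := ih (by omega)
    refine ⟨Equiv.swap ⟨m', by omega⟩ ⟨m'+1, hL⟩ * c, fun i => ?_, ?_⟩
    · have h1 := hc i
      rw [Equiv.Perm.mul_apply, Equiv.swap_apply_def]
      simp only [Fin.ext_iff]
      rw [apply_ite Fin.val, apply_ite Fin.val, h1]
      simp only [cycleFun]
      split_ifs <;> omega
    · rw [Equiv.Perm.sign_mul, Equiv.Perm.sign_swap (by simp), hs, Nat.succ_sub hm, pow_succ, mul_comm]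

theorem parts_of_length {P : Partition} {n : ℕ} (h : P.length ≤ n) : P.parts n = 0 := by
  have h0 : P.parts P.length = 0 := by
    obtain ⟨N, hN⟩ := P.eventually_zero
    exact Nat.sInf_mem (s := {N | P.parts N = 0}) ⟨N, hN N le_rfl⟩
  have := P.antitone h
  omega

theorem sign_pi {k p M : ℕ} (hk : 0 < k) {P : Partition} {Q : Fin k → Partition}
    (hQ : QuotD k P Q (fun _ => 0)) (hM : Filled M P) (T : RHT P (List.replicate p k))
    (π : Equiv.Perm (Fin P.length)) (hπ : IsZeroPerm T π) :
    ((Equiv.Perm.sign π : ℤˣ) : ℤ) = eps k (Zf M P) * eps k (Zf M Partition.empty) := by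
  obtain ⟨q, hq1, hq2, hq3⟩ := hπ
  have main : ∀ j, ∃ σ : Equiv.Perm (Fin P.length),
      (∀ i : Fin P.length, q j i = (σ i.rev : Fin P.length)) ∧
      ((Equiv.Perm.sign σ : ℤˣ) : ℤ) * eps k (Zf M (T.chain j)) = eps k (Zf M P) ∧
      Filled M (T.chain j) ∧ (∃ Q', QuotD k (T.chain j) Q' (fun _ => 0)) ∧
      (∀ n, P.length ≤ n → (T.chain j).parts n = 0) := by
    intro j
    induction j using Fin.reverseInduction with
    | last =>
      refine ⟨1, fun i => ?_, ?_, ?_, ?_, ?_⟩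
      · rw [hq1 i i.2]
        simp [Fin.val_rev]; omega
      · rw [T.chain_last]; simp
      · rw [T.chain_last]; exact hM
      · rw [T.chain_last]; exact ⟨Q, hQ⟩
      · rw [T.chain_last]; exact fun n hn => parts_of_length hn
    | cast j ih =>
      obtain ⟨σ, h1, h2, h3, ⟨Q', hQ'⟩, h5⟩ := ih
      have hst := T.step j
      have hget : (List.replicate p k).get j = k := by simp
      rw [hget] at hst
      have hook : IsRimHook (T.chain j.succ) (T.chain j.castSucc) k := by
        rcases hst with h | h
        · omega
        · exact h.2
      have htr := hq2 j
      generalize T.chain j.succ = A at *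
      generalize T.chain j.castSucc = B at *
      have hle : B ≤ A := hook.1
      have hne : A ≠ B := by
        rintro rfl
        obtain ⟨c, hc⟩ := hook.2.1
        rw [mem_skew] at hc
        omega
      rcases htr with h | ⟨m, m', hmm, s1, s2, s3, hg⟩
      · exact absurd h.1 hne
      have hsh : Shift A B m m' := ⟨hmm, s1, s2, s3⟩
      have hrow := (hsh.rows hle hne m').2 ⟨hmm, le_rfl⟩
      have hL : m' < P.length := by
        by_contra hh
        have := h5 m' (by omega)
        omega
      obtain ⟨c, hc, hsc⟩ := cyc_exists P.length m m' hmm hL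
      obtain ⟨_, x, hx⟩ := isRimHook_iff.1 hook
      have hht := hx.height hk
      rw [hsh.rowCount hle hne] at hht
      refine ⟨c * σ, fun i => ?_, ?_, hx.filled h3, hQ'.step hk hook, ?_⟩
      · rw [hg, Equiv.Perm.mul_apply, hc, ← h1]
      · obtain ⟨i, j', rfl⟩ := fin_surj hk x
        have hkey := sign_key (t := 1) hk one_pos hQ' h3 i j' (by rwa [mul_one])
        have hemp : btwSet (Q' i) j' 1 = ∅ := by
          ext b
          simp only [btwSet, Set.mem_ofPred_eq, Set.mem_empty_iff_false, iff_false]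
          rintro ⟨_, hb1, hb2⟩
          push_cast at hb1
          omega
        rw [hemp, Set.ncard_empty, pow_zero, mul_one, mul_one, ← hht] at hkey
        have hmm' : m' + 1 - m - 1 = m' - m := by omega
        rw [hmm'] at hkey
        rw [Equiv.Perm.sign_mul, hsc]
        push_cast
        rw [hkey, ← h2]
        have := eps_sq k (Zf M A)
        have := eps_sq k (Zf M B)
        linear_combination (eps k (Zf M A) * ((Equiv.Perm.sign σ : ℤˣ) : ℤ)) * this
      · intro n hn
        have := hle n
        have := h5 n hn
        omega
  obtain ⟨σ, h1, h2, -, -, -⟩ := main 0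
  rw [T.chain_zero] at h2
  have h3 : σ * Fin.revPerm * π = Fin.revPerm := by
    ext i
    have := hq3 i
    rw [h1] at this
    simp only [Equiv.Perm.mul_apply, Fin.revPerm_apply]
    rw [this, Fin.val_rev]
    omega
  have h4 := congrArg Equiv.Perm.sign h3
  rw [Equiv.Perm.sign_mul, Equiv.Perm.sign_mul, mul_right_comm] at h4
  have h5 : Equiv.Perm.sign σ * Equiv.Perm.sign π = 1 := by
    simpa using h4
  have h6 : Equiv.Perm.sign π = Equiv.Perm.sign σ := by
    have : Equiv.Perm.sign σ * Equiv.Perm.sign σ = 1 := by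
      rw [← sq]; exact Int.units_sq _
    rw [← one_mul (Equiv.Perm.sign π), ← this, mul_assoc, h5, mul_one]
  rw [h6, ← h2]
  have := eps_sq k (Zf M Partition.empty)
  linear_combination (-((Equiv.Perm.sign σ : ℤˣ) : ℤ)) * this

/-- Littlewood's reduction formula: let `λ ⊢ kp`. If
`core_k(λ) ≠ ∅` then `χ^λ_{kμ} = 0` for every `μ ⊢ p`. If `core_k(λ) = ∅` with
`k`-quotient `(λ₁,…,λ_k)`, then for every `μ ⊢ p`:
`χ^λ_{kμ} = sign(π_λ) · Σ (z_μ/(z_{μ₁}⋯z_{μ_k})) ∏ᵢ χ^{λᵢ}_{μᵢ}`, summed over all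
`k`-tuples `(μ₁,…,μ_k)` with `μᵢ ⊢ |λᵢ|` and `μ₁ ⊕ ⋯ ⊕ μ_k = μ`. -/
theorem littlewood_reduction (k p : ℕ) (hk : 2 ≤ k) (P : Partition)
    (hP : P.size = k * p) :
    ((∀ C : Partition, IsKCore k P C → C ≠ Partition.empty) →
      ∀ μ : Nat.Partition p, chi P (μ.parts.map fun x => k * x) = 0) ∧
    (∀ Q : Fin k → Partition, IsKCore k P Partition.empty → IsKQuotient k P Q →
      ∀ (T₀ : RHT P (List.replicate p k)) (π : Equiv.Perm (Fin P.length)),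
        IsZeroPerm T₀ π →
        ∀ μ : Nat.Partition p,
          (chi P (μ.parts.map fun x => k * x) : ℚ) =
            ((Equiv.Perm.sign π : ℤ) : ℚ) *
              ∑ ν : (i : Fin k) → Nat.Partition (Q i).size,
                if (∑ i : Fin k, (ν i).parts) = μ.parts then
                  ((zpart μ.parts : ℚ) / ∏ i : Fin k, (zpart (ν i).parts : ℚ)) *
                    ∏ i : Fin k, (chi (Q i) (ν i).parts : ℚ)
                else 0) := by
  have hk0 : 0 < k := by omega
  have hchi : ∀ μ : Nat.Partition p, chi P (μ.parts.map fun x => k * x) =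
      X ((μ.parts.sort (· ≤ ·)).map fun x => k * x) P := by
    intro μ
    rw [chi_eq]
    · congr 1
      symm
      apply Multiset.map_sort
      intro a _ b _
      exact (Nat.mul_le_mul_left_iff hk0).symm
    · intro i hi
      obtain ⟨x, hx, rfl⟩ := Multiset.mem_map.1 hi
      exact Nat.mul_pos hk0 (μ.parts_pos hx)
  have hpos : ∀ μ : Nat.Partition p, ∀ t ∈ μ.parts.sort (· ≤ ·), 0 < t := by
    intro μ t ht
    exact μ.parts_pos (by simpa using ht)
  constructor
  · intro hcore μ
    by_contra hne
    rw [hchi] at hne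
    have hr := X_reach hk0 _ (hpos μ) P hne
    refine hcore _ ⟨hr, ?_⟩ rfl
    rintro ⟨C', -, ⟨c, hc⟩, -⟩
    have := (mem_skew.1 hc).2
    exact absurd this (Nat.not_lt_zero _)
  · intro Q hcore hQ T₀ π hπ μ
    choose d hd using hQ
    have hQd : QuotD k P Q d := hd
    obtain ⟨Q', hQ'⟩ := hQd.reach hk0 hcore.1
    have hd0 := hQ'.empty_zero
    subst hd0
    obtain ⟨M, hM0⟩ := filled_exists P
    have hM : Filled M P := fun x hx => isZeroAt_of_lt hM0 hx
    rw [hchi, X_eq_Y (M := M) hk0 _ (hpos μ) P Q hQd hM, sign_pi hk0 hQd hM T₀ π hπ,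
      Int.cast_mul, Y_eq _ (hpos μ) (Multiset.pairwise_sort _ _), Multiset.sort_eq]
    congr 1
    rw [← Finset.sum_filter]
    symm
    apply Finset.sum_of_injOn (e := fun (ν : (i : Fin k) → Nat.Partition (Q i).size) i => (ν i).parts)
    · intro a _ b _ hab
      funext i
      exact Nat.Partition.ext (congrFun hab i)
    · intro a ha
      have ha' := (Finset.mem_filter.1 (Finset.mem_coe.1 ha)).2
      exact Finset.mem_coe.2 (mem_AA.2 ha')
    · intro ν hν hnot
      have hs := mem_AA.1 hν
      have hp : ∀ i, ∀ t ∈ ν i, 0 < t := fun i t ht =>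
        μ.parts_pos (Multiset.mem_of_le (le_of_sum hs i) ht)
      have : XF Q ν = 0 := by
        by_contra hne
        apply hnot
        have hsz : ∀ i, (ν i).sum = (Q i).size := by
          intro i
          have h1 : X ((ν i).sort (· ≤ ·)) (Q i) ≠ 0 :=
            Finset.prod_ne_zero_iff.1 hne i (Finset.mem_univ _)
          have h2 := X_size _ (fun t ht => hp i t (by simpa using ht)) _ h1
          rw [← h2, ← Multiset.sum_coe, Multiset.sort_eq]
        refine ⟨fun i => ⟨ν i, fun {t} ht => hp i t ht, hsz i⟩, ?_, rfl⟩
        simpa using hs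
      rw [this]
      simp
    · intro ν _
      have : ∀ i, chi (Q i) (ν i).parts = X ((ν i).parts.sort (· ≤ ·)) (Q i) :=
        fun i => chi_eq _ _ (fun t ht => (ν i).parts_pos ht)
      simp only [cf, XF, this]
      push_cast
      rfl

end RimHookPaper
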